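/- arXiv:1511.05583 — 2 statements merged into one kernel-verified Lean document; each statement's English description precedes it below -/
import Mathlib

section
/- Let P ≥ 1 and 1 ≤ p ≤ P be integers and let ξ > 0. Then lim_{ρ → ∞} ρ^{p(m+1)} · μ_{a,m}^{⊗P}({x ∈ ℝ^P : #{i : x_i > ρξ} ≥ p}) = C(P,p) · ( (m+1)! · (aξ)^{m+1} )^{-p}. In particular the outage probability of the p-th ordered user decays like ρ^{-p(m+1)}, i.e., the achieved diversity order is p(m+1) (equal to p(N - M̃ + 1) in the paper's notation). -/
/-!
The substitution `x ↦ 1 / x` turns the total mass of the inverse-gamma density into a Gamma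
integral. For `x > t > 0` the factor `exp (-1 / (a * x))` of the inverse-gamma density lies between
`exp (-1 / (a * t))` and `1`, so the tail `q = μ (t, ∞)` is squeezed between the corresponding
multiples of the tail of a pure power, and `t ^ (m + 1) * q` converges. The number of coordinates
exceeding `t` is binomial with success probability `q`; its upper tail at `p` is `q ^ p` times a
polynomial in `q` whose value at `0` is `n.choose p`.
-/

open MeasureTheory Filter

/-- The inverse-gamma density with shape `m+1` and scale `1/a`:
`f a m x = x^{-(m+2)} e^{-1/(a x)} / (m! a^{m+1})` for `x > 0`, and `0` otherwise. -/
noncomputable def invGammaDensity (a : ℝ) (m : ℕ) (x : ℝ) : ℝ :=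
  if 0 < x then x ^ (-((m : ℤ) + 2)) * Real.exp (-(1 / (a * x))) / (m.factorial * a ^ (m + 1))
  else 0

/-- The inverse-gamma probability measure `μ_{a,m}` on `ℝ`. -/
noncomputable def invGammaMeasure (a : ℝ) (m : ℕ) : Measure ℝ :=
  volume.withDensity (fun x => ENNReal.ofReal (invGammaDensity a m x))

open Set
open scoped Finset Nat Topology

section BinomialTail

variable {R : Type*} [CommRing R]

/-- The probability that a binomial variable with `n` trials and success probability `q` is at
least `p`, as a polynomial expression in an element `q` of any commutative ring. -/
def binomialUpperTail (n p : ℕ) (q : R) : R :=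
  ∑ k ∈ Finset.Icc p n, n.choose k * (q ^ k * (1 - q) ^ (n - k))

lemma binomialUpperTail_eq_pow_mul (n p : ℕ) (q : R) :
    binomialUpperTail n p q =
      q ^ p * ∑ k ∈ Finset.Icc p n, n.choose k * (q ^ (k - p) * (1 - q) ^ (n - k)) := by
  rw [binomialUpperTail, Finset.mul_sum]
  refine Finset.sum_congr rfl fun k hk ↦ ?_
  rw [← pow_mul_pow_sub q (Finset.mem_Icc.1 hk).1]
  ring

lemma sum_Icc_choose_mul_zero_pow_sub (n p : ℕ) :
    ∑ k ∈ Finset.Icc p n, (n.choose k : R) * (0 ^ (k - p) * (1 - 0) ^ (n - k)) = n.choose p := by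
  rw [Finset.sum_eq_single p]
  · simp
  · intro k hk hkp
    have hpk := (Finset.mem_Icc.1 hk).1
    simp [zero_pow (show k - p ≠ 0 by lia)]
  · intro hp
    have hnp : n < p := by simpa using hp
    simp [Nat.choose_eq_zero_of_lt hnp]

lemma tendsto_pow_mul_binomialUpperTail [TopologicalSpace R] [IsTopologicalRing R]
    {β : Type*} {l : Filter β} {w q : β → R} {c : R} (hq : Tendsto q l (𝓝 0))
    (hwq : Tendsto (fun b ↦ w b * q b) l (𝓝 c)) (n p : ℕ) :
    Tendsto (fun b ↦ w b ^ p * binomialUpperTail n p (q b)) l (𝓝 (n.choose p * c ^ p)) := by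
  have hcofactor : Tendsto
      (fun b ↦ ∑ k ∈ Finset.Icc p n, (n.choose k : R) * (q b ^ (k - p) * (1 - q b) ^ (n - k)))
      l (𝓝 (n.choose p)) := by
    rw [← sum_Icc_choose_mul_zero_pow_sub]
    exact tendsto_finsetSum _ fun k _ ↦
      ((hq.pow _).mul ((hq.const_sub 1).pow _)).const_mul _
  rw [mul_comm]
  refine ((hwq.pow p).mul hcofactor).congr fun b ↦ ?_
  rw [binomialUpperTail_eq_pow_mul, mul_pow, mul_assoc]

end BinomialTail

section Counting

variable {ι α : Type*} [Fintype ι] {s : Set α} [DecidablePred (· ∈ s)]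

lemma setOf_filter_mem_eq_pi [DecidableEq ι] (S : Finset ι) :
    {x : ι → α | ({i | x i ∈ s} : Finset ι) = S} =
      univ.pi fun i ↦ if i ∈ S then s else sᶜ := by
  ext x
  simp only [mem_ofPred_eq, Finset.ext_iff, Finset.mem_filter_univ, mem_univ_pi]
  refine forall_congr' fun i ↦ ?_
  by_cases hi : i ∈ S <;> simp [hi]

variable [MeasurableSpace α] {μ : Measure α}

lemma measurableSet_setOf_filter_mem_eq (hs : MeasurableSet s) (S : Finset ι) :
    MeasurableSet {x : ι → α | ({i | x i ∈ s} : Finset ι) = S} := by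
  classical
  rw [setOf_filter_mem_eq_pi]
  refine .univ_pi fun i ↦ ?_
  split_ifs
  exacts [hs, hs.compl]

lemma pi_real_setOf_filter_mem_eq [SigmaFinite μ] (S : Finset ι) :
    (Measure.pi fun _ : ι ↦ μ).real {x | ({i | x i ∈ s} : Finset ι) = S} =
      μ.real s ^ #S * μ.real sᶜ ^ (Fintype.card ι - #S) := by
  classical
  simp only [setOf_filter_mem_eq_pi, Measure.real, Measure.pi_pi, apply_ite μ,
    Finset.prod_ite, Finset.prod_const]
  simp [Finset.filter_not, ← Finset.compl_eq_univ_sdiff, Finset.card_compl]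

lemma pi_real_setOf_le_card_filter_mem [IsProbabilityMeasure μ] (hs : MeasurableSet s) (p : ℕ) :
    (Measure.pi fun _ : ι ↦ μ).real {x | p ≤ #{i | x i ∈ s}} =
      binomialUpperTail (Fintype.card ι) p (μ.real s) := by
  classical
  let pattern (x : ι → α) : Finset ι := {i | x i ∈ s}
  calc (Measure.pi fun _ : ι ↦ μ).real {x | p ≤ #{i | x i ∈ s}}
      = (Measure.pi fun _ : ι ↦ μ).real
          (pattern ⁻¹' ({S | p ≤ #S} : Finset (Finset ι))) := by
            simp [pattern, preimage]
    _ = ∑ S with p ≤ #S, μ.real s ^ #S * (1 - μ.real s) ^ (Fintype.card ι - #S) := by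
      rw [← sum_measureReal_preimage_singleton _
        fun S _ ↦ measurableSet_setOf_filter_mem_eq hs S]
      refine Finset.sum_congr rfl fun S _ ↦ ?_
      rw [← probReal_compl_eq_one_sub hs]
      exact pi_real_setOf_filter_mem_eq S
    _ = binomialUpperTail (Fintype.card ι) p (μ.real s) := by
      rw [Finset.sum_filter, ← Finset.powerset_univ, Finset.sum_powerset_apply_card
        fun k ↦ if p ≤ k then μ.real s ^ k * (1 - μ.real s) ^ (Fintype.card ι - k) else 0]
      simp only [nsmul_eq_mul, mul_ite, mul_zero, ← Finset.sum_filter, binomialUpperTail]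
      refine Finset.sum_congr ?_ fun _ _ ↦ rfl
      ext k
      simp [and_comm]

end Counting

lemma tendsto_pow_mul_pi_real_setOf_le_card_filter_mem {ι α β : Type*} [Fintype ι]
    [MeasurableSpace α] {μ : Measure α} [IsProbabilityMeasure μ] {s : β → Set α}
    [∀ b, DecidablePred (· ∈ s b)] (hs : ∀ b, MeasurableSet (s b)) {l : Filter β} {w : β → ℝ}
    {c : ℝ} (hw : Tendsto w l atTop) (hws : Tendsto (fun b ↦ w b * μ.real (s b)) l (𝓝 c))
    (p : ℕ) :
    Tendsto (fun b ↦ w b ^ p * (Measure.pi fun _ : ι ↦ μ).real {x | p ≤ #{i | x i ∈ s b}}) l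
      (𝓝 ((Fintype.card ι).choose p * c ^ p)) := by
  simp only [pi_real_setOf_le_card_filter_mem (hs _)]
  refine tendsto_pow_mul_binomialUpperTail ?_ hws _ p
  refine (hws.div_atTop hw).congr' ?_
  filter_upwards [hw.eventually_ne_atTop 0] with b hb
  exact mul_div_cancel_left₀ _ hb

section InverseGamma

variable {a : ℝ} (ha : 0 < a) (m : ℕ)

lemma invGammaDensity_of_pos {x : ℝ} (hx : 0 < x) :
    invGammaDensity a m x =
      x ^ (-((m : ℝ) + 2)) / (m ! * a ^ (m + 1)) * Real.exp (-(1 / (a * x))) := by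
  rw [invGammaDensity, if_pos hx, ← Real.rpow_intCast]
  push_cast
  ring

include ha

lemma invGammaDensity_nonneg (x : ℝ) : 0 ≤ invGammaDensity a m x := by
  unfold invGammaDensity
  split_ifs <;> positivity

lemma integral_invGammaDensity : ∫ x, invGammaDensity a m x = 1 := by
  let g (y : ℝ) : ℝ := y ^ ((m + 1 : ℝ) - 1) * Real.exp (-(a⁻¹ * y))
  have hsupport : ∀ x ∉ Ioi (0 : ℝ), invGammaDensity a m x = 0 := fun x hx ↦ if_neg hx
  have hdensity : ∀ x ∈ Ioi (0 : ℝ), invGammaDensity a m x =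
      (m ! * a ^ (m + 1))⁻¹ * ((|(-1 : ℝ)| * x ^ (-1 - 1 : ℝ)) • g (x ^ (-1 : ℝ))) := by
    intro x hx
    have hpow : x ^ (-((m : ℝ) + 2)) = x ^ (-1 - 1 : ℝ) * (x ^ (-1 : ℝ)) ^ ((m + 1 : ℝ) - 1) := by
      rw [← Real.rpow_mul (le_of_lt hx), ← Real.rpow_add hx]
      ring_nf
    rw [invGammaDensity_of_pos m hx, hpow]
    simp only [g, Real.rpow_neg_one, abs_neg, abs_one, smul_eq_mul, one_div, mul_inv]
    ring
  calc ∫ x, invGammaDensity a m x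
      = ∫ x in Ioi 0, invGammaDensity a m x :=
        (setIntegral_eq_integral_of_forall_compl_eq_zero hsupport).symm
    _ = (m ! * a ^ (m + 1))⁻¹ * ∫ y in Ioi 0, g y := by
      rw [setIntegral_congr_fun measurableSet_Ioi hdensity, integral_const_mul,
        integral_comp_rpow_Ioi g (by simp)]
    _ = (m ! * a ^ (m + 1))⁻¹ * ((1 / a⁻¹) ^ (m + 1 : ℝ) * Real.Gamma (m + 1)) := by
      rw [Real.integral_rpow_mul_exp_neg_mul_Ioi (by positivity) (inv_pos.2 ha)]
    _ = 1 := by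
      rw [Real.Gamma_nat_eq_factorial, one_div, inv_inv, mul_comm (m ! : ℝ)]
      norm_cast
      field_simp

lemma integrable_invGammaDensity : Integrable (invGammaDensity a m) :=
  .of_integral_ne_zero (by simp [integral_invGammaDensity ha m])

lemma invGammaMeasure_real_apply {s : Set ℝ} (hs : MeasurableSet s) :
    (invGammaMeasure a m).real s = ∫ x in s, invGammaDensity a m x := by
  have hnonneg := invGammaDensity_nonneg ha m
  rw [Measure.real, invGammaMeasure, withDensity_apply _ hs,
    ← ofReal_integral_eq_lintegral_ofReal (integrable_invGammaDensity ha m).integrableOn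
      (ae_of_all _ hnonneg),
    ENNReal.toReal_ofReal (integral_nonneg hnonneg)]

lemma isProbabilityMeasure_invGammaMeasure : IsProbabilityMeasure (invGammaMeasure a m) := by
  rw [isProbabilityMeasure_iff_real, invGammaMeasure_real_apply ha m .univ, setIntegral_univ,
    integral_invGammaDensity ha m]

omit ha

lemma integral_Ioi_rpow_neg_add_two_div {t : ℝ} (ht : 0 < t) :
    ∫ x in Ioi t, x ^ (-((m : ℝ) + 2)) / (m ! * a ^ (m + 1)) =
      ((m + 1)! * (a * t) ^ (m + 1))⁻¹ := by
  have hexponent : -((m : ℝ) + 2) + 1 = -((m + 1 : ℕ) : ℝ) := by push_cast; ring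
  rw [integral_div, integral_Ioi_rpow_of_lt (by linarith) ht, hexponent,
    Real.rpow_neg ht.le, Real.rpow_natCast, mul_pow, Nat.factorial_succ]
  push_cast
  field_simp

lemma integrableOn_Ioi_rpow_neg_add_two_div {t : ℝ} (ht : 0 < t) :
    IntegrableOn (fun x : ℝ ↦ x ^ (-((m : ℝ) + 2)) / (m ! * a ^ (m + 1))) (Ioi t) :=
  (integrableOn_Ioi_rpow_of_lt (by linarith) ht).div_const _

include ha

lemma invGammaMeasure_real_Ioi_le {t : ℝ} (ht : 0 < t) :
    (invGammaMeasure a m).real (Ioi t) ≤ ((m + 1)! * (a * t) ^ (m + 1))⁻¹ := by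
  rw [invGammaMeasure_real_apply ha m measurableSet_Ioi,
    ← integral_Ioi_rpow_neg_add_two_div m ht]
  refine setIntegral_mono_on (integrable_invGammaDensity ha m).integrableOn
    (integrableOn_Ioi_rpow_neg_add_two_div m ht) measurableSet_Ioi fun x hx ↦ ?_
  have hx : 0 < x := ht.trans hx
  rw [invGammaDensity_of_pos m hx]
  exact mul_le_of_le_one_right (by positivity)
    (Real.exp_le_one_iff.2 (neg_nonpos.2 (by positivity)))

lemma le_invGammaMeasure_real_Ioi {t : ℝ} (ht : 0 < t) :
    ((m + 1)! * (a * t) ^ (m + 1))⁻¹ * Real.exp (-(1 / (a * t))) ≤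
      (invGammaMeasure a m).real (Ioi t) := by
  rw [invGammaMeasure_real_apply ha m measurableSet_Ioi,
    ← integral_Ioi_rpow_neg_add_two_div m ht, ← integral_mul_const]
  refine setIntegral_mono_on ((integrableOn_Ioi_rpow_neg_add_two_div m ht).mul_const _)
    (integrable_invGammaDensity ha m).integrableOn measurableSet_Ioi fun x hx ↦ ?_
  have htx : t ≤ x := le_of_lt hx
  have hx : 0 < x := ht.trans_le htx
  rw [invGammaDensity_of_pos m hx]
  gcongr

lemma tendsto_pow_mul_invGammaMeasure_real_Ioi {ξ : ℝ} (hξ : 0 < ξ) :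
    Tendsto (fun ρ ↦ ρ ^ (m + 1) * (invGammaMeasure a m).real (Ioi (ρ * ξ))) atTop
      (𝓝 ((m + 1)! * (a * ξ) ^ (m + 1))⁻¹) := by
  have hscale {ρ : ℝ} (hρ : 0 < ρ) : ρ ^ (m + 1) * ((m + 1)! * (a * (ρ * ξ)) ^ (m + 1))⁻¹ =
      ((m + 1)! * (a * ξ) ^ (m + 1))⁻¹ := by
    rw [mul_left_comm a, mul_pow ρ]
    field_simp
  have hexp : Tendsto (fun ρ ↦ Real.exp (-(1 / (a * (ρ * ξ))))) atTop (𝓝 1) := by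
    have harg : Tendsto (fun ρ ↦ a * (ρ * ξ)) atTop atTop :=
      (tendsto_id.atTop_mul_const hξ).const_mul_atTop ha
    simpa using (harg.const_div_atTop 1).neg.rexp
  have hlower := hexp.const_mul ((m + 1)! * (a * ξ) ^ (m + 1) : ℝ)⁻¹
  rw [mul_one] at hlower
  refine tendsto_of_tendsto_of_tendsto_of_le_of_le' hlower tendsto_const_nhds ?_ ?_
  · filter_upwards [eventually_gt_atTop 0] with ρ hρ
    rw [← hscale hρ, mul_assoc]
    gcongr
    exact le_invGammaMeasure_real_Ioi ha m (by positivity)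
  · filter_upwards [eventually_gt_atTop 0] with ρ hρ
    rw [← hscale hρ]
    gcongr
    exact invGammaMeasure_real_Ioi_le ha m (by positivity)

end InverseGamma

/-- Diversity order of the `p`-th ordered user (Theorem 1): as `ρ → ∞`,
`ρ^{p(m+1)} μ_{a,m}^{⊗P}({x : #{i : x_i > ρξ} ≥ p}) → C(P,p) ((m+1)! (aξ)^{m+1})^{-p}`,
so the outage probability decays like `ρ^{-p(m+1)}`, i.e. the diversity order is
`p(m+1) = p(N - M̃ + 1)`. -/
theorem diversity_order_ordered_user (a : ℝ) (ha : 0 < a) (m : ℕ)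
    (P p : ℕ) (hP : 1 ≤ P) (hp : 1 ≤ p) (hpP : p ≤ P) (ξ : ℝ) (hξ : 0 < ξ) :
    Tendsto (fun ρ : ℝ => ρ ^ (p * (m + 1)) *
        ((Measure.pi (fun _ : Fin P => invGammaMeasure a m))
            {x : Fin P → ℝ | p ≤ (Finset.univ.filter (fun i => ρ * ξ < x i)).card}).toReal)
      atTop
      (nhds ((P.choose p : ℝ) * ((((m + 1).factorial : ℝ) * (a * ξ) ^ (m + 1))⁻¹) ^ p)) := by
  have := isProbabilityMeasure_invGammaMeasure ha m
  have hcount := tendsto_pow_mul_pi_real_setOf_le_card_filter_mem (ι := Fin P)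
    (fun ρ : ℝ ↦ measurableSet_Ioi (a := ρ * ξ)) (tendsto_pow_atTop m.succ_ne_zero)
    (tendsto_pow_mul_invGammaMeasure_real_Ioi ha m hξ) p
  simpa only [← pow_mul', Fintype.card_fin] using! hcount
end

section
/- Let X, Y be i.i.d. real random variables whose common CDF F is continuous, and let B be uniform on {1,2}, independent of (X,Y); write Mx = max(X,Y), Mn = min(X,Y). Let τ̃ > 0 and t₁, t₂ ≥ 0, and set φ_i = max(τ̃, t_i). Define the strong user's one-bit-feedback outage event E₂ = ({Mn < τ̃ ≤ Mx} ∩ {Mn > t₂}) ∪ ({Mx < τ̃} ∩ {Mn > t_B}) ∪ ({Mn ≥ τ̃} ∩ {Mn > φ_B}). Then P(E₂) = 2[F(τ̃) - F(t₂)]⁺(1 - F(τ̃)) + ∑_{i=1}^{2} F(τ̃)[F(τ̃) - F(t_i)]⁺ - (1/2)∑_{i=1}^{2}[F(τ̃)² - F(t_i)²]⁺ + (1/2)∑_{i=1}^{2}(1 - F(φ_i))², where [x]⁺ = max(0,x). -/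
open MeasureTheory ProbabilityTheory

/-!
The pair `(X, Y)` and the ordering bit `B` are independent, so the outage probability is the
mixture, over the two values of the bit, of the probabilities that `(X, Y)` falls into two fixed
planar regions. Such a region is a disjoint union of four rectangles, according to which of the two
noise powers exceed the threshold. The product law of `(X, Y)` therefore evaluates it from interval
probabilities, for which continuity of the distribution functions makes endpoints irrelevant. When
both users share the sub-group below the threshold this gives the square `([F τ - F t]⁺) ^ 2`,
which equals `2 F τ [F τ - F t]⁺ - [F τ ^ 2 - F t ^ 2]⁺`.
-/

theorem sq_max_zero_sub {R : Type*} [CommRing R] [LinearOrder R] [IsStrictOrderedRing R]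
    {a b : R} (ha : 0 ≤ a) (hb : 0 ≤ b) :
    max 0 (b - a) ^ 2 = 2 * (b * max 0 (b - a)) - max 0 (b ^ 2 - a ^ 2) := by
  rcases le_total a b with hab | hba
  · have hsq : a ^ 2 ≤ b ^ 2 := pow_le_pow_left₀ ha hab 2
    rw [max_eq_right (sub_nonneg.2 hab), max_eq_right (sub_nonneg.2 hsq)]
    ring
  · have hsq : b ^ 2 ≤ a ^ 2 := pow_le_pow_left₀ hb hba 2
    rw [max_eq_left (sub_nonpos.2 hba), max_eq_left (sub_nonpos.2 hsq)]
    ring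

section CDF

variable (μ : Measure ℝ) [IsProbabilityMeasure μ]

theorem nullSingletonClass_of_continuous_cdf (hμ : Continuous (cdf μ)) : NullSingletonClass μ where
  measure_singleton x := by
    rw [← measure_cdf μ, StieltjesFunction.measure_singleton,
      hμ.continuousWithinAt.leftLim_eq, sub_self, ENNReal.ofReal_zero]

theorem measureReal_Ioi_eq_one_sub_cdf (a : ℝ) : μ.real (Set.Ioi a) = 1 - cdf μ a := by
  rw [← Set.compl_Iic, probReal_compl_eq_one_sub measurableSet_Iic, cdf_eq_real]

theorem measureReal_Ici_eq_one_sub_cdf [NullSingletonClass μ] (a : ℝ) :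
    μ.real (Set.Ici a) = 1 - cdf μ a := by
  rw [← measureReal_congr Ioi_ae_eq_Ici, measureReal_Ioi_eq_one_sub_cdf]

theorem measureReal_Ioc_eq_max_cdf_sub (a b : ℝ) :
    μ.real (Set.Ioc a b) = max 0 (cdf μ b - cdf μ a) := by
  rw [measureReal_def, ← measure_cdf μ, StieltjesFunction.measure_Ioc, measure_cdf,
    ENNReal.toReal_ofReal', max_comm]

theorem measureReal_Ioo_eq_max_cdf_sub [NullSingletonClass μ] (a b : ℝ) :
    μ.real (Set.Ioo a b) = max 0 (cdf μ b - cdf μ a) := by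
  rw [measureReal_congr Ioo_ae_eq_Ioc, measureReal_Ioc_eq_max_cdf_sub]

end CDF

section OutageRegion

/-- The noise powers `(x, y)` of the two users for which the strong user, of noise power `min x y`,
is in outage. The feedback threshold is `τ`; the strong user tolerates noise up to `s` when the two
feedback bits differ, up to `t` when both noise powers are below `τ`, and up to `max τ t` when both
are at least `τ`. -/
def strongOutageRegion (τ s t : ℝ) : Set (ℝ × ℝ) :=
  {z | (min z.1 z.2 < τ ∧ τ ≤ max z.1 z.2 ∧ s < min z.1 z.2) ∨
    (max z.1 z.2 < τ ∧ t < min z.1 z.2) ∨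
    (τ ≤ min z.1 z.2 ∧ max τ t < min z.1 z.2)}

theorem strongOutageRegion_eq_union_rectangles (τ s t : ℝ) :
    strongOutageRegion τ s t =
      Set.Ioo s τ ×ˢ Set.Ici τ ∪ Set.Ici τ ×ˢ Set.Ioo s τ ∪ Set.Ioo t τ ×ˢ Set.Ioo t τ ∪
        Set.Ioi (max τ t) ×ˢ Set.Ioi (max τ t) := by
  ext ⟨x, y⟩
  simp only [strongOutageRegion, Set.mem_ofPred_eq, Set.mem_union, Set.mem_prod, Set.mem_Ioo,
    Set.mem_Ici, Set.mem_Ioi]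
  grind

theorem measurableSet_strongOutageRegion (τ s t : ℝ) :
    MeasurableSet (strongOutageRegion τ s t) := by
  rw [strongOutageRegion_eq_union_rectangles]
  measurability

theorem measureReal_prod_strongOutageRegion (μ ν : Measure ℝ) [IsProbabilityMeasure μ]
    [IsProbabilityMeasure ν] [NullSingletonClass μ] [NullSingletonClass ν] (τ s t : ℝ) :
    (μ.prod ν).real (strongOutageRegion τ s t) =
      max 0 (cdf μ τ - cdf μ s) * (1 - cdf ν τ) + (1 - cdf μ τ) * max 0 (cdf ν τ - cdf ν s) +
        max 0 (cdf μ τ - cdf μ t) * max 0 (cdf ν τ - cdf ν t) +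
        (1 - cdf μ (max τ t)) * (1 - cdf ν (max τ t)) := by
  have disjoint_Ioo_Ici (a : ℝ) : Disjoint (Set.Ioo a τ) (Set.Ici τ) :=
    Set.disjoint_left.2 fun _ hx hx' => hx.2.not_ge hx'
  have disjoint_Ioo_Ioi (a : ℝ) : Disjoint (Set.Ioo a τ) (Set.Ioi (max τ t)) :=
    (disjoint_Ioo_Ici a).mono_right fun _ hx => (le_max_left τ t).trans hx.le
  rw [strongOutageRegion_eq_union_rectangles, measureReal_union, measureReal_union,
    measureReal_union]
  · simp only [measureReal_prod_prod, measureReal_Ioo_eq_max_cdf_sub,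
      measureReal_Ici_eq_one_sub_cdf, measureReal_Ioi_eq_one_sub_cdf]
  · exact Set.disjoint_prod.2 (.inl (disjoint_Ioo_Ici s))
  · exact measurableSet_Ici.prod measurableSet_Ioo
  · exact Set.disjoint_union_left.2 ⟨Set.disjoint_prod.2 (.inr (disjoint_Ioo_Ici t).symm),
      Set.disjoint_prod.2 (.inl (disjoint_Ioo_Ici t).symm)⟩
  · exact measurableSet_Ioo.prod measurableSet_Ioo
  · simp only [Set.disjoint_union_left, Set.disjoint_prod]
    exact ⟨⟨.inl (disjoint_Ioo_Ioi s), .inr (disjoint_Ioo_Ioi s)⟩, .inl (disjoint_Ioo_Ioi t)⟩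
  · exact measurableSet_Ioi.prod measurableSet_Ioi

end OutageRegion

section RandomVariables

variable {Ω : Type*} {mΩ : MeasurableSpace Ω} {μ : Measure Ω} [IsProbabilityMeasure μ]

theorem cdf_map_eq_measureReal_le {X : Ω → ℝ} (hX : AEMeasurable X μ) (x : ℝ) :
    cdf (μ.map X) x = μ.real {ω | X ω ≤ x} := by
  have := Measure.isProbabilityMeasure_map hX
  rw [cdf_eq_real, map_measureReal_apply_of_aemeasurable hX measurableSet_Iic]
  rfl

theorem measureReal_strongOutageRegion_of_indepFun {X Y : Ω → ℝ}
    (hX : AEMeasurable X μ) (hY : AEMeasurable Y μ) (hXY : IndepFun X Y μ) {F G : ℝ → ℝ}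
    (hF : ∀ x, F x = μ.real {ω | X ω ≤ x}) (hG : ∀ x, G x = μ.real {ω | Y ω ≤ x})
    (hFcont : Continuous F) (hGcont : Continuous G) (τ s t : ℝ) :
    μ.real {ω | (X ω, Y ω) ∈ strongOutageRegion τ s t} =
      max 0 (F τ - F s) * (1 - G τ) + (1 - F τ) * max 0 (G τ - G s) +
        max 0 (F τ - F t) * max 0 (G τ - G t) + (1 - F (max τ t)) * (1 - G (max τ t)) := by
  have := Measure.isProbabilityMeasure_map hX
  have := Measure.isProbabilityMeasure_map hY
  obtain rfl : F = cdf (μ.map X) := funext fun x => by rw [hF, cdf_map_eq_measureReal_le hX]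
  obtain rfl : G = cdf (μ.map Y) := funext fun x => by rw [hG, cdf_map_eq_measureReal_le hY]
  have := nullSingletonClass_of_continuous_cdf _ hFcont
  have := nullSingletonClass_of_continuous_cdf _ hGcont
  rw [← measureReal_prod_strongOutageRegion,
    ← (indepFun_iff_map_prod_eq_prod_map_map hX hY).1 hXY,
    map_measureReal_apply_of_aemeasurable (hX.prodMk hY) (measurableSet_strongOutageRegion τ s t)]
  rfl

theorem measureReal_ite_preimage_of_indepFun {α β : Type*} [MeasurableSpace α]
    [MeasurableSpace β] {Z : Ω → α} {B : Ω → β} (hB : AEMeasurable B μ) (hZB : IndepFun Z B μ)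
    {A : Set β} (hA : MeasurableSet A) {S T : Set α} (hS : MeasurableSet S)
    (hT : MeasurableSet T) :
    μ.real ((B ⁻¹' A).ite (Z ⁻¹' S) (Z ⁻¹' T)) =
      μ.real (B ⁻¹' A) * μ.real (Z ⁻¹' S) + (1 - μ.real (B ⁻¹' A)) * μ.real (Z ⁻¹' T) := by
  have hBA : NullMeasurableSet (B ⁻¹' A) μ := hB.nullMeasurable hA
  have indep {U : Set α} {C : Set β} (hU : MeasurableSet U) (hC : MeasurableSet C) :
      μ.real (Z ⁻¹' U ∩ B ⁻¹' C) = μ.real (Z ⁻¹' U) * μ.real (B ⁻¹' C) := by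
    simp only [measureReal_def, hZB.measure_inter_preimage_eq_mul _ _ hU hC, ENNReal.toReal_mul]
  rw [← measureReal_inter_add_sdiff₀ hBA, Set.ite_inter_self, Set.ite_sdiff_self, Set.sdiff_eq,
    ← Set.preimage_compl, indep hS hA, indep hT hA.compl, Set.preimage_compl,
    probReal_compl_eq_one_sub₀ hBA]
  ring

theorem one_bit_feedback_strong_user_outage_general {β : Type*} [MeasurableSpace β]
    [MeasurableSingletonClass β] [DecidableEq β] {X Y : Ω → ℝ} {B : Ω → β} {b : β}
    (hX : AEMeasurable X μ) (hY : AEMeasurable Y μ) (hB : AEMeasurable B μ)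
    (hXY : IndepFun X Y μ) (hXYB : IndepFun (fun ω => (X ω, Y ω)) B μ)
    {p : ℝ} (hp : μ.real {ω | B ω = b} = p) {F G : ℝ → ℝ}
    (hF : ∀ x, F x = μ.real {ω | X ω ≤ x}) (hG : ∀ x, G x = μ.real {ω | Y ω ≤ x})
    (hFcont : Continuous F) (hGcont : Continuous G) (τ s t₁ t₂ : ℝ) :
    μ.real {ω | (X ω, Y ω) ∈ strongOutageRegion τ s (if B ω = b then t₁ else t₂)} =
      max 0 (F τ - F s) * (1 - G τ) + (1 - F τ) * max 0 (G τ - G s) +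
        (p * (max 0 (F τ - F t₁) * max 0 (G τ - G t₁)) +
          (1 - p) * (max 0 (F τ - F t₂) * max 0 (G τ - G t₂))) +
        (p * ((1 - F (max τ t₁)) * (1 - G (max τ t₁))) +
          (1 - p) * ((1 - F (max τ t₂)) * (1 - G (max τ t₂)))) := by
  let Z : Ω → ℝ × ℝ := fun ω => (X ω, Y ω)
  have region_prob (t : ℝ) := measureReal_strongOutageRegion_of_indepFun hX hY hXY hF hG hFcont
    hGcont τ s t
  calc μ.real {ω | Z ω ∈ strongOutageRegion τ s (if B ω = b then t₁ else t₂)}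
    _ = μ.real ((B ⁻¹' {b}).ite (Z ⁻¹' strongOutageRegion τ s t₁)
          (Z ⁻¹' strongOutageRegion τ s t₂)) := by
        congr 1 with ω
        by_cases h : B ω = b <;> simp [Set.ite, h]
    _ = p * μ.real {ω | Z ω ∈ strongOutageRegion τ s t₁} +
          (1 - p) * μ.real {ω | Z ω ∈ strongOutageRegion τ s t₂} := by
        rw [← hp]
        exact measureReal_ite_preimage_of_indepFun hB hXYB (measurableSet_singleton b)
          (measurableSet_strongOutageRegion τ s t₁) (measurableSet_strongOutageRegion τ s t₂)
    _ = _ := by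
        rw [region_prob, region_prob]
        ring

end RandomVariables

/-- One-bit-feedback outage probability of the strong user (P = 2 case): for i.i.d. `X, Y`
with common continuous CDF `F`, `B` uniform on `{1,2}` independent of `(X,Y)`,
`Mx = max(X,Y)`, `Mn = min(X,Y)`, threshold `τ̃ > 0`, outage levels `t₁, t₂ ≥ 0` and
`φ_i = max(τ̃, t_i)`, the probability of the strong user's outage event
`E₂ = ({Mn < τ̃ ≤ Mx} ∩ {Mn > t₂}) ∪ ({Mx < τ̃} ∩ {Mn > t_B}) ∪ ({Mn ≥ τ̃} ∩ {Mn > φ_B})`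
equals
`2[F(τ̃)-F(t₂)]⁺(1-F(τ̃)) + ∑ᵢ F(τ̃)[F(τ̃)-F(tᵢ)]⁺ - (1/2)∑ᵢ[F(τ̃)²-F(tᵢ)²]⁺
  + (1/2)∑ᵢ(1-F(φᵢ))²`. -/
theorem one_bit_feedback_strong_user_outage
    {Ω : Type*} [MeasureSpace Ω] [IsProbabilityMeasure (ℙ : Measure Ω)]
    (X Y : Ω → ℝ) (B : Ω → ℕ)
    (hX : Measurable X) (hY : Measurable Y) (hB : Measurable B)
    (hXY : IndepFun X Y ℙ)
    (hid : Measure.map X ℙ = Measure.map Y ℙ)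
    (hXYB : IndepFun (fun ω => (X ω, Y ω)) B ℙ)
    (hB1 : ℙ {ω | B ω = 1} = 1/2) (hB2 : ℙ {ω | B ω = 2} = 1/2)
    (F : ℝ → ℝ) (hF : ∀ x, F x = (ℙ {ω | X ω ≤ x}).toReal)
    (hFcont : Continuous F)
    (τ' : ℝ) (hτ' : 0 < τ') (t₁ t₂ : ℝ) (ht₁ : 0 ≤ t₁) (ht₂ : 0 ≤ t₂) :
    (ℙ {ω |
        (min (X ω) (Y ω) < τ' ∧ τ' ≤ max (X ω) (Y ω) ∧ t₂ < min (X ω) (Y ω)) ∨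
        (max (X ω) (Y ω) < τ' ∧
          (if B ω = 1 then t₁ else t₂) < min (X ω) (Y ω)) ∨
        (τ' ≤ min (X ω) (Y ω) ∧
          (if B ω = 1 then max τ' t₁ else max τ' t₂) < min (X ω) (Y ω))}).toReal
      = 2 * max 0 (F τ' - F t₂) * (1 - F τ')
        + (F τ' * max 0 (F τ' - F t₁) + F τ' * max 0 (F τ' - F t₂))
        - (1/2) * (max 0 (F τ' ^ 2 - F t₁ ^ 2) + max 0 (F τ' ^ 2 - F t₂ ^ 2))
        + (1/2) * ((1 - F (max τ' t₁)) ^ 2 + (1 - F (max τ' t₂)) ^ 2) := by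
  have hp : (ℙ : Measure Ω).real {ω | B ω = 1} = 1 / 2 := by simp [measureReal_def, hB1]
  have hG (x : ℝ) : F x = (ℙ : Measure Ω).real {ω | Y ω ≤ x} := by
    rw [← cdf_map_eq_measureReal_le hY.aemeasurable, ← hid,
      cdf_map_eq_measureReal_le hX.aemeasurable, hF, measureReal_def]
  have F_nonneg (x : ℝ) : 0 ≤ F x := hG x ▸ measureReal_nonneg
  have outage := one_bit_feedback_strong_user_outage_general hX.aemeasurable hY.aemeasurable
    hB.aemeasurable hXY hXYB hp hF hG hFcont hFcont τ' t₂ t₁ t₂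
  simp only [strongOutageRegion, Set.mem_ofPred_eq, apply_ite (max τ'), ← sq,
    sq_max_zero_sub (F_nonneg _) (F_nonneg _)] at outage
  rw [← measureReal_def, outage]
  ring
end
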